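/- arXiv:1811.04739 — 2 statements merged into one kernel-verified Lean document; each statement's English description precedes it below -/
import Mathlib

section
/- Let H₁ and H₂ be complex Hilbert spaces, let A : H₁ → H₁ and B : H₂ → H₂ be bounded positive (i.e. nonnegative selfadjoint) operators, and let T : H₁ → H₂ be a bounded linear operator such that ‖B(Tu)‖ ≤ M‖Au‖ for all u ∈ H₁, where M ≥ 0. Then for every a ∈ (0,1) one has ‖B^a(Tu)‖ ≤ M^a · ‖T‖^{1−a} · ‖A^a u‖ for all u ∈ H₁, where A^a and B^a denote the a-th powers of A and B given by the continuous functional calculus (real power of a nonnegative operator). -/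
open MeasureTheory Real Set in
open scoped NNReal in
lemma hk_integral {A : Type*} [CStarAlgebra A] [PartialOrder A] [StarOrderedRing A]
    {p : ℝ≥0} (hp : (p : ℝ) ∈ Ioo (0 : ℝ) 1) (μ : Measure ℝ)
    (hμ : ∀ x ∈ Ici (0 : ℝ),
      (IntegrableOn (fun t => rpowIntegrand₀₁ p t x) (Ioi 0) μ)
      ∧ x ^ (p : ℝ) = ∫ t in Ioi 0, rpowIntegrand₀₁ p t x ∂μ) (a : A) (ha : 0 ≤ a) :
      (IntegrableOn (fun t => cfcₙ (rpowIntegrand₀₁ p t) a) (Ioi 0) μ)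
      ∧ a ^ p = ∫ t in Ioi 0, cfcₙ (rpowIntegrand₀₁ p t) a ∂μ := by
  nontriviality A
  have p_pos : 0 < (p : ℝ) := by exact_mod_cast hp.1
  let f t := rpowIntegrand₀₁ p t
  let maxr := sSup (quasispectrum ℝ a)
  have maxr_nonneg : 0 ≤ maxr :=
    le_csSup_of_le (b := 0) (IsCompact.bddAbove (by grind)) (by simp) (by simp)
  let bound (t : ℝ) := ‖f t maxr‖
  have hf : ContinuousOn (Function.uncurry f) (Ioi (0 : ℝ) ×ˢ quasispectrum ℝ a) := by
    refine continuousOn_rpowIntegrand₀₁_uncurry hp (quasispectrum ℝ a) ?_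
    grind
  have hbound : ∀ᵐ t ∂μ.restrict (Ioi 0), ∀ z ∈ quasispectrum ℝ a, ‖f t z‖ ≤ bound t := by
    filter_upwards [ae_restrict_mem measurableSet_Ioi] with t ht
    intro z hz
    have hz' : 0 ≤ z := by grind
    unfold bound f
    rw [Real.norm_of_nonneg (rpowIntegrand₀₁_nonneg p_pos (le_of_lt ht) hz'),
        Real.norm_of_nonneg (rpowIntegrand₀₁_nonneg p_pos (le_of_lt ht) maxr_nonneg)]
    refine rpowIntegrand₀₁_monotoneOn hp (le_of_lt ht) hz' maxr_nonneg ?_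
    exact le_csSup (IsCompact.bddAbove (quasispectrum.isCompact _)) hz
  have hbound_finite_integral : HasFiniteIntegral bound (μ.restrict (Ioi 0)) := by
    rw [hasFiniteIntegral_norm_iff]
    exact (hμ maxr maxr_nonneg).1.2
  have hmapzero : ∀ᵐ (x : ℝ) ∂μ.restrict (Ioi 0), rpowIntegrand₀₁ p x 0 = 0 := by
    filter_upwards [ae_restrict_mem measurableSet_Ioi]
    simp
  refine ⟨?integrable, ?integral⟩
  case integrable =>
    exact integrableOn_cfcₙ measurableSet_Ioi _ bound a hf hmapzero hbound hbound_finite_integral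
  case integral => calc
    a ^ p = cfcₙ (fun r => ∫ t in Ioi 0, rpowIntegrand₀₁ p t r ∂μ) a := by
      rw [CFC.nnrpow_eq_cfcₙ_real _ _]
      exact cfcₙ_congr fun r _ ↦ (hμ r (by grind)).2
    _ = _ := cfcₙ_setIntegral measurableSet_Ioi _ bound a hf hmapzero hbound
                hbound_finite_integral ha.isSelfAdjoint

/-- the integrand evaluated at an operator, through the resolvent -/
lemma hk_integrand {A : Type*} [CStarAlgebra A] [PartialOrder A] [StarOrderedRing A]
    {p t : ℝ} (hp : p ∈ Set.Ioo (0 : ℝ) 1) (ht : 0 < t) (x : A) (hx : 0 ≤ x) :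
    ∃ R : A, (algebraMap ℝ A t + x) * R = 1 ∧
      cfcₙ (Real.rpowIntegrand₀₁ p t) x = t ^ p • (algebraMap ℝ A t⁻¹ - R) := by
  have hsp : ∀ r ∈ spectrum ℝ x, 0 ≤ r := by grind
  have hne : ∀ r ∈ spectrum ℝ x, t + r ≠ 0 := fun r hr => by have := hsp r hr; positivity
  have hg : ContinuousOn (fun z : ℝ => (t + z)⁻¹) (spectrum ℝ x) := by
    refine ContinuousOn.inv₀ (by fun_prop) hne
  have hsa : IsSelfAdjoint x := hx.isSelfAdjoint
  refine ⟨cfc (fun z : ℝ => (t + z)⁻¹) x, ?_, ?_⟩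
  · have h1 : algebraMap ℝ A t + x = cfc (fun z : ℝ => t + z) x := by
      rw [cfc_const_add .., cfc_id' ..]
    rw [h1, ← cfc_mul _ _ x (by fun_prop) hg, ← cfc_one ℝ x]
    refine cfc_congr fun r hr => ?_
    simp [mul_inv_cancel₀ (hne r hr)]
  · have hc : ContinuousOn (Real.rpowIntegrand₀₁ p t) (spectrum ℝ x) :=
      (Real.continuousOn_rpowIntegrand₀₁_Ici hp ht).mono hsp
    have hq : ContinuousOn (Real.rpowIntegrand₀₁ p t) (quasispectrum ℝ x) :=
      (Real.continuousOn_rpowIntegrand₀₁_Ici hp ht).mono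
        (fun r hr => quasispectrum_nonneg_of_nonneg x hx r hr)
    have h0 : Real.rpowIntegrand₀₁ p t 0 = 0 := Real.rpowIntegrand₀₁_zero_right
    rw [cfcₙ_eq_cfc hq h0]
    have hk : ContinuousOn (fun _ : ℝ => t⁻¹) (spectrum ℝ x) := continuousOn_const
    have e : Real.rpowIntegrand₀₁ p t = fun z => t ^ p * ((fun _ => t⁻¹) z - (fun z => (t + z)⁻¹) z) := rfl
    rw [e, cfc_const_mul _ (fun z => (fun _ => t⁻¹) z - (fun z => (t + z)⁻¹) z) x (hk.sub hg), cfc_sub _ _ x hk hg, cfc_const _ x hsa]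

lemma hk_alg {A : Type*} [CStarAlgebra A] [PartialOrder A] [StarOrderedRing A]
    (B : A) (hB : 0 ≤ B) {p : NNReal} (hp : 0 < p) :
    (B * B) ^ p = B ^ (p : ℝ) * B ^ (p : ℝ) := by
  rw [← CFC.nnrpow_two B hB, CFC.nnrpow_nnrpow, ← CFC.nnrpow_eq_rpow hp,
      ← CFC.nnrpow_add hp hp, two_mul]

lemma hk_smul {A : Type*} [CStarAlgebra A] [PartialOrder A] [StarOrderedRing A]
    (B : A) (hB : 0 ≤ B) {p c : ℝ} (hp : 0 < p) (hc : 0 ≤ c) :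
    (c • B) ^ p = c ^ p • B ^ p := by
  have hcB : 0 ≤ c • B := smul_nonneg hc hB
  rw [CFC.rpow_eq_cfc_real, CFC.rpow_eq_cfc_real,
    ← cfc_comp_smul (R := ℝ) c (fun x => x ^ p) B
      (Real.continuous_rpow_const hp.le).continuousOn,
    ← cfc_smul (R := ℝ) (c ^ p) _ B (Real.continuous_rpow_const hp.le).continuousOn]
  refine cfc_congr fun r hr => ?_
  have : 0 ≤ r := spectrum_nonneg_of_nonneg hB hr
  simp [Real.mul_rpow hc this]

section
variable {H : Type*} [NormedAddCommGroup H] [InnerProductSpace ℂ H] [CompleteSpace H]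

lemma hk_var (P : H →L[ℂ] H) (hP : 0 ≤ P) {t : ℝ} (ht : 0 < t) (u w : H)
    (hw : (t : ℂ) • w + P w = (t : ℂ) • u) (v : H) :
    t * RCLike.re (inner ℂ (u - w) (u)) ≤ RCLike.re (inner ℂ (P v) (v)) + t * ‖u - v‖ ^ 2 ∧
    t * RCLike.re (inner ℂ (u - w) (u)) = RCLike.re (inner ℂ (P w) (w)) + t * ‖u - w‖ ^ 2 := by
  have hPw : P w = (t : ℂ) • (u - w) := by rw [smul_sub, ← hw]; abel
  have hPp := (ContinuousLinearMap.nonneg_iff_isPositive P).1 hP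
  have hpos := hPp.re_inner_nonneg_left (v - w)
  have hsym : RCLike.re (inner ℂ (P v) (w)) = RCLike.re (inner ℂ (P w) (v)) := by
    rw [hPp.inner_left_eq_inner_right, inner_re_symm]
  have e1 : ∀ y, RCLike.re (inner ℂ (P w) (y)) = t * RCLike.re (inner ℂ (u - w) (y)) := by
    intro y; rw [hPw, inner_smul_left, Complex.conj_ofReal]; exact Complex.re_ofReal_mul _ _
  have e2 : ‖u - v‖ ^ 2 = ‖u - w‖ ^ 2 - 2 * RCLike.re (inner ℂ (u - w) (v - w)) + ‖v - w‖ ^ 2 := by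
    rw [← @norm_sub_sq ℂ]; congr 2; abel
  have e3 : ‖u - w‖ ^ 2 = RCLike.re (inner ℂ (u - w) (u)) - RCLike.re (inner ℂ (u - w) (w)) := by
    rw [← map_sub, ← inner_sub_right]; exact (inner_self_eq_norm_sq (𝕜 := ℂ) _).symm
  have key : t * RCLike.re (inner ℂ (u - w) (u)) = RCLike.re (inner ℂ (P w) (w)) + t * ‖u - w‖ ^ 2 := by
    rw [e1, e3]; ring
  refine ⟨?_, key⟩
  rw [key, e2]
  simp only [map_sub, inner_sub_left (P v), inner_sub_right, hsym, e1] at hpos ⊢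
  nlinarith [mul_nonneg ht.le (sq_nonneg ‖v - w‖)]

lemma hk_res (P R : H →L[ℂ] H) {t : ℝ} (hR : (algebraMap ℝ (H →L[ℂ] H) t + P) * R = 1) (u : H) :
    (t : ℂ) • ((t : ℂ) • R u) + P ((t : ℂ) • R u) = (t : ℂ) • u := by
  have := congrArg (fun F : H →L[ℂ] H => F u) hR
  simp only [Algebra.algebraMap_eq_smul_one, mul_apply_eq_comp, add_apply, smul_apply,
    one_apply_eq_self] at this
  rw [map_smul, ← smul_add, Complex.coe_smul, Complex.coe_smul, this, Complex.coe_smul]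

lemma hk_expand (P F R : H →L[ℂ] H) {t c : ℝ}
    (hR : (algebraMap ℝ (H →L[ℂ] H) t + P) * R = 1) (u : H) (ht : 0 < t)
    (hF : F = c • (algebraMap ℝ (H →L[ℂ] H) t⁻¹ - R)) :
    RCLike.re (inner ℂ (F u) (u)) = c * t⁻¹ * RCLike.re (inner ℂ (u - (t : ℂ) • R u) (u)) := by
  have : F u = ((c * t⁻¹ : ℝ) : ℂ) • (u - (t : ℂ) • R u) := by
    rw [hF, Complex.coe_smul, Complex.coe_smul]
    simp only [Algebra.algebraMap_eq_smul_one, sub_apply, smul_apply, one_apply_eq_self,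
      smul_sub, smul_smul]
    rw [mul_assoc, inv_mul_cancel₀ ht.ne', mul_one]
  rw [this, inner_smul_left, Complex.conj_ofReal]
  exact Complex.re_ofReal_mul _ _

lemma hk_sq (B : H →L[ℂ] H) (hB : 0 ≤ B) (v : H) : RCLike.re (inner ℂ ((B * B) v) (v)) = ‖B v‖ ^ 2 := by
  have hPp := (ContinuousLinearMap.nonneg_iff_isPositive B).1 hB
  rw [mul_apply_eq_comp, hPp.inner_left_eq_inner_right]
  exact inner_self_eq_norm_sq _

lemma hk_pow_sq (B : H →L[ℂ] H) (hB : 0 ≤ B) {p : NNReal} (hp : 0 < p) (v : H) :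
    RCLike.re (inner ℂ (((B * B) ^ p) v) (v)) = ‖(B ^ (p : ℝ)) v‖ ^ 2 := by
  have h0 : 0 ≤ B ^ (p : ℝ) := CFC.rpow_nonneg
  have h1 : (B * B) ^ p = B ^ (p : ℝ) * B ^ (p : ℝ) := hk_alg B hB hp
  rw [h1]
  exact hk_sq _ h0 v

lemma hk_int {μ : MeasureTheory.Measure ℝ} (F : ℝ → H →L[ℂ] H)
    (hF : MeasureTheory.Integrable F μ) (u : H) :
    MeasureTheory.Integrable (fun t => RCLike.re (inner ℂ (F t u) (u))) μ ∧
      RCLike.re (inner ℂ ((∫ t, F t ∂μ) u) (u)) = ∫ t, RCLike.re (inner ℂ (F t u) (u)) ∂μ := by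
  have h1 : MeasureTheory.Integrable (fun t => F t u) μ := hF.apply_continuousLinearMap u
  have h2 : MeasureTheory.Integrable (fun t => inner ℂ u (F t u)) μ := h1.const_inner u
  simp only [inner_re_symm (𝕜 := ℂ) _ u]
  refine ⟨h2.re, ?_⟩
  rw [ContinuousLinearMap.integral_apply hF, ← integral_inner h1, integral_re h2]

end

section
variable {H₁ H₂ : Type*} [NormedAddCommGroup H₁] [InnerProductSpace ℂ H₁] [CompleteSpace H₁]
    [NormedAddCommGroup H₂] [InnerProductSpace ℂ H₂] [CompleteSpace H₂]

lemma hk_one (A : H₁ →L[ℂ] H₁) (B : H₂ →L[ℂ] H₂) (T : H₁ →L[ℂ] H₂)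
    (hA : 0 ≤ A) (hB : 0 ≤ B) (hT1 : ‖T‖ ≤ 1)
    (hT : ∀ u : H₁, ‖B (T u)‖ ≤ ‖A u‖)
    (a : ℝ) (ha : a ∈ Set.Ioo (0 : ℝ) 1) (u : H₁) :
    ‖(B ^ a) (T u)‖ ≤ ‖(A ^ a) u‖ := by
  lift a to NNReal using ha.1.le
  have ha0 : 0 < a := by exact_mod_cast ha.1
  obtain ⟨μ, hμ⟩ := Real.exists_measure_rpow_eq_integral_rpowIntegrand₀₁ ha
  have hAA : 0 ≤ A * A := by simpa [hA.isSelfAdjoint.star_eq] using star_mul_self_nonneg A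
  have hBB : 0 ≤ B * B := by simpa [hB.isSelfAdjoint.star_eq] using star_mul_self_nonneg B
  obtain ⟨iA, eA⟩ := hk_integral ha μ hμ (A * A) hAA
  obtain ⟨iB, eB⟩ := hk_integral ha μ hμ (B * B) hBB
  rw [← pow_le_pow_iff_left₀ (norm_nonneg _) (norm_nonneg _) two_ne_zero,
    ← hk_pow_sq A hA ha0, ← hk_pow_sq B hB ha0, eA, eB]
  obtain ⟨jA, fA⟩ := hk_int _ iA u
  obtain ⟨jB, fB⟩ := hk_int _ iB (T u)
  rw [fA, fB]
  refine MeasureTheory.setIntegral_mono_on jB jA measurableSet_Ioi fun t ht => ?_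
  have ht : 0 < t := ht
  obtain ⟨R, hR, gR⟩ := hk_integrand ha ht (A * A) hAA
  obtain ⟨S, hS, gS⟩ := hk_integrand ha ht (B * B) hBB
  rw [hk_expand _ _ R hR u ht gR, hk_expand _ _ S hS (T u) ht gS]
  have v1 := (hk_var _ hAA ht u _ (hk_res _ R hR u) u).2
  have v2 := (hk_var _ hBB ht (T u) _ (hk_res _ S hS (T u)) (T ((t : ℂ) • R u))).1
  rw [hk_sq A hA] at v1
  rw [hk_sq B hB, ← map_sub] at v2
  have n1 := hT ((t : ℂ) • R u)
  have n2 : ‖T (u - (t : ℂ) • R u)‖ ≤ ‖u - (t : ℂ) • R u‖ :=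
    (T.le_of_opNorm_le hT1 _).trans_eq (one_mul _)
  have : t * RCLike.re (inner ℂ (T u - (t : ℂ) • S (T u)) (T u)) ≤ t * RCLike.re (inner ℂ (u - (t : ℂ) • R u) (u)) := by
    rw [v1]
    refine v2.trans ?_
    gcongr
  have := le_of_mul_le_mul_left this ht
  gcongr
end

/-- **Heinz–Kato inequality** (bounded-operator form, Theorem 1 of the paper).
If `A`, `B` are bounded nonnegative selfadjoint operators on complex Hilbert spaces
`H₁`, `H₂`, and `T : H₁ →L[ℂ] H₂` satisfies `‖B (T u)‖ ≤ M * ‖A u‖` for all `u`,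
then for every `a ∈ (0,1)` one has `‖B^a (T u)‖ ≤ M^a * ‖T‖^(1-a) * ‖A^a u‖`,
where the fractional powers are given by the continuous functional calculus. -/
theorem heinz_kato
    {H₁ H₂ : Type*} [NormedAddCommGroup H₁] [InnerProductSpace ℂ H₁] [CompleteSpace H₁]
    [NormedAddCommGroup H₂] [InnerProductSpace ℂ H₂] [CompleteSpace H₂]
    (A : H₁ →L[ℂ] H₁) (B : H₂ →L[ℂ] H₂) (T : H₁ →L[ℂ] H₂)
    (hA : 0 ≤ A) (hB : 0 ≤ B)
    (M : ℝ) (hM : 0 ≤ M)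
    (hT : ∀ u : H₁, ‖B (T u)‖ ≤ M * ‖A u‖)
    (a : ℝ) (ha : a ∈ Set.Ioo (0 : ℝ) 1) :
    ∀ u : H₁, ‖(B ^ a) (T u)‖ ≤ M ^ a * ‖T‖ ^ (1 - a) * ‖(A ^ a) u‖ := by
  intro u
  have key : ∀ ε : ℝ, 0 < ε →
      ‖(B ^ a) (T u)‖ ≤ (M + ε) ^ a * (‖T‖ + ε) ^ (1 - a) * ‖(A ^ a) u‖ := by
    intro ε hε
    have hτ : 0 < ‖T‖ + ε := by positivity
    have hm : 0 < M + ε := by positivity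
    set τ := ‖T‖ + ε with hτd
    set m := M + ε with hmd
    have h := hk_one ((m / τ) • A) B (τ⁻¹ • T) (smul_nonneg (by positivity) hA) hB
      (by
        rw [norm_smul, norm_inv, Real.norm_of_nonneg hτ.le, inv_mul_le_one₀ hτ]
        linarith)
      (by
        intro v
        simp only [smul_apply, ContinuousLinearMap.map_smul_of_tower, norm_smul, norm_inv,
          norm_div, Real.norm_of_nonneg hτ.le, Real.norm_of_nonneg hm.le]
        have : ‖B (T v)‖ ≤ m * ‖A v‖ := (hT v).trans (by gcongr; linarith)
        rw [div_eq_inv_mul, mul_assoc]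
        gcongr) a ha u
    rw [hk_smul A hA ha.1 (by positivity)] at h
    simp only [smul_apply, ContinuousLinearMap.map_smul_of_tower, norm_smul, norm_inv,
          Real.norm_of_nonneg hτ.le] at h
    rw [Real.norm_of_nonneg (by positivity), inv_mul_le_iff₀ hτ, Real.div_rpow hm.le hτ.le] at h
    rw [Real.rpow_sub hτ, Real.rpow_one]
    refine h.trans_eq ?_
    ring
  have hc : Filter.Tendsto
      (fun ε : ℝ => (M + ε) ^ a * (‖T‖ + ε) ^ (1 - a) * ‖(A ^ a) u‖) (nhdsWithin 0 (Set.Ioi 0))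
      (nhds ((M + 0) ^ a * (‖T‖ + 0) ^ (1 - a) * ‖(A ^ a) u‖)) := by
    refine Filter.Tendsto.mono_left (Continuous.tendsto ?_ 0) nhdsWithin_le_nhds
    have h1 := Real.continuous_rpow_const ha.1.le
    have h2 := Real.continuous_rpow_const (sub_nonneg.2 ha.2.le)
    exact ((h1.comp (continuous_const.add continuous_id)).mul
      (h2.comp (continuous_const.add continuous_id))).mul continuous_const
  rw [add_zero, add_zero] at hc
  refine ge_of_tendsto hc ?_
  filter_upwards [self_mem_nhdsWithin] with ε hε using key ε hε
end

section
/- Let 𝒜 be a unital C*-algebra, let a, b be positive elements of 𝒜, let t ∈ 𝒜, and let M ≥ 0 satisfy the operator inequality t* b² t ≤ M² a². Then for every α ∈ (0,1) one has t* b^{2α} t ≤ M^{2α} · ‖t‖^{2(1−α)} · a^{2α}, where the fractional powers are given by the continuous functional calculus (real powers of nonnegative elements). -/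
open scoped NNReal in
/-- Continuous functional calculus intertwines: if `z u = v z` then `z f(u) = f(v) z`. -/
theorem hk_intertwine {𝒜 : Type*} [CStarAlgebra 𝒜] (u v z : 𝒜)
    (hu : IsSelfAdjoint u) (hv : IsSelfAdjoint v) (h : z * u = v * z)
    (f : ℝ → ℝ) (hf : Continuous f) : z * cfc f u = cfc f v * z := by
  have hpoly : ∀ q : Polynomial ℝ, z * Polynomial.aeval u q = Polynomial.aeval v q * z := by
    intro q
    induction q using Polynomial.induction_on' with
    | add p q hp hq => simp [mul_add, add_mul, hp, hq]
    | monomial n r =>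
      have hn : z * u ^ n = v ^ n * z := by
        have h' : SemiconjBy z u v := h
        exact (h'.pow_right n)
      simp only [Polynomial.aeval_monomial]
      rw [← mul_assoc, ← Algebra.commutes, mul_assoc, hn, mul_assoc]
  obtain ⟨R, hR⟩ : ∃ R : ℝ, spectrum ℝ u ⊆ Set.Icc (-R) R ∧ spectrum ℝ v ⊆ Set.Icc (-R) R := by
    have hb : Bornology.IsBounded (spectrum ℝ u ∪ spectrum ℝ v) :=
      (spectrum.isBounded u).union (spectrum.isBounded v)
    obtain ⟨R, hR⟩ := hb.subset_closedBall 0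
    rw [Real.closedBall_eq_Icc] at hR
    simp only [zero_sub, zero_add] at hR
    exact ⟨R, Set.subset_union_left.trans hR, Set.subset_union_right.trans hR⟩
  have key : ∀ ε : ℝ, 0 < ε → ‖z * cfc f u - cfc f v * z‖ ≤ ε * (2 * ‖z‖) := by
    intro ε hε
    obtain ⟨q, hq⟩ := exists_polynomial_near_of_continuousOn (-R) R f hf.continuousOn ε hε
    have hd : ∀ w : 𝒜, IsSelfAdjoint w → spectrum ℝ w ⊆ Set.Icc (-R) R →
        ‖cfc f w - Polynomial.aeval w q‖ ≤ ε := by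
      intro w hw hs
      rw [← cfc_polynomial q w hw, ← cfc_sub f q.eval w hf.continuousOn
        q.continuous.continuousOn]
      refine norm_cfc_le hε.le fun x hx => ?_
      rw [norm_sub_rev]
      exact (hq x (hs hx)).le
    have e : z * cfc f u - cfc f v * z = z * (cfc f u - Polynomial.aeval u q)
        - (cfc f v - Polynomial.aeval v q) * z := by
      rw [mul_sub, sub_mul, hpoly q]; abel
    rw [e]
    calc _ ≤ ‖z‖ * ε + ε * ‖z‖ := by
          refine (norm_sub_le _ _).trans (add_le_add ?_ ?_)
          · exact (norm_mul_le _ _).trans (by gcongr; exact hd u hu hR.1)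
          · exact (norm_mul_le _ _).trans (by gcongr; exact hd v hv hR.2)
      _ = _ := by ring
  have h0 : ‖z * cfc f u - cfc f v * z‖ ≤ 0 := by
    have ht : Filter.Tendsto (fun ε : ℝ => ε * (2 * ‖z‖)) (nhdsWithin 0 (Set.Ioi 0)) (nhds 0) := by
      have : Continuous (fun ε : ℝ => ε * (2 * ‖z‖)) := by fun_prop
      simpa using (this.tendsto 0).mono_left nhdsWithin_le_nhds
    exact ge_of_tendsto ht (by filter_upwards [self_mem_nhdsWithin] with ε hε using key ε hε)
  exact sub_eq_zero.mp (norm_le_zero_iff.mp h0)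

section
variable {𝒜 : Type*} [CStarAlgebra 𝒜] [PartialOrder 𝒜] [StarOrderedRing 𝒜]

theorem hk_anti {v c : 𝒜} (hv : IsStrictlyPositive v) (h : v ≤ c) {q : ℝ}
    (hq0 : 0 < q) (hq1 : q ≤ 1) : c ^ (-q) ≤ v ^ (-q) := by
  have hc := hv.of_le h
  have h1 := CFC.rpow_le_rpow (p := q) ⟨hq0.le, hq1⟩ h
  have h2 := CStarAlgebra.rpow_neg_one_le_rpow_neg_one h1 (hv.rpow _ _)
  rw [CFC.rpow_rpow _ _ _ hq0.ne', CFC.rpow_rpow _ _ _ hq0.ne'] at h2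
  simpa using h2

open scoped NNReal in
theorem hk_hansen_eps (x t : 𝒜) (hx : 0 ≤ x) (ht : ‖t‖ ≤ 1) (p : ℝ) (hp : p ∈ Set.Ioo (0 : ℝ) 1)
    (e : ℝ≥0) (he : 0 < e) :
    star t * x ^ p * t ≤ (star t * x * t + algebraMap ℝ≥0 𝒜 e) ^ p
      + algebraMap ℝ≥0 𝒜 (e ^ p) * (star t * t) := by
  obtain ⟨hp0, hp1⟩ := hp
  set E : 𝒜 := algebraMap ℝ≥0 𝒜 e with hE
  have hEc : ∀ y : 𝒜, E * y = y * E := fun y => Algebra.commutes e y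
  have hE0 : IsStrictlyPositive E := by
    refine IsUnit.isStrictlyPositive ((IsUnit.mk0 e he.ne').map (algebraMap ℝ≥0 𝒜)) ?_
    rw [hE, Algebra.algebraMap_eq_smul_one]
    exact smul_nonneg (zero_le) zero_le_one
  set s := CFC.sqrt x with hs
  have hss : s * s = x := CFC.sqrt_mul_sqrt_self x
  have hsa : star s = s := (IsSelfAdjoint.of_nonneg (CFC.sqrt_nonneg x)).star_eq
  set z := s * t with hz
  have hzz : star z * z = star t * x * t := by
    rw [hz, star_mul, hsa, ← hss]; simp only [mul_assoc]
  set u := star z * z + E with hu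
  set v := z * star z + E with hv
  set c := x + E with hc
  have hu0 : IsStrictlyPositive u := hE0.nonneg_add (star_mul_self_nonneg z)
  have hv0 : IsStrictlyPositive v := hE0.nonneg_add (mul_star_self_nonneg z)
  have hc0 : IsStrictlyPositive c := hE0.nonneg_add hx
  have htt : t * star t ≤ 1 := by
    have := (CStarAlgebra.norm_le_one_iff_of_nonneg (t * star t) (mul_star_self_nonneg t)).mp
      (by rw [CStarRing.norm_self_mul_star]; nlinarith [norm_nonneg t])
    exact this
  have hvc : v ≤ c := by
    have := star_right_conjugate_le_conjugate htt s
    rw [hsa, mul_one, hss] at this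
    have e1 : z * star z = s * (t * star t) * s := by
      rw [hz, star_mul, hsa]; simp only [mul_assoc]
    rw [hv, hc, e1]
    gcongr
  set q := 1 - p with hq
  have hq0 : 0 < q := by rw [hq]; linarith
  have hq1 : q ≤ 1 := by rw [hq]; linarith
  -- intertwining
  have hswap : z * u ^ q = v ^ q * z := by
    rw [CFC.rpow_eq_cfc_real hu0.nonneg, CFC.rpow_eq_cfc_real hv0.nonneg]
    refine hk_intertwine u v z (.of_nonneg hu0.nonneg) (.of_nonneg hv0.nonneg) ?_ _
      (Real.continuous_rpow_const hq0.le)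
    rw [hu, hv, mul_add, add_mul, hEc, mul_assoc z (star z) z]
  have hswapneg : v ^ (-q) * z = z * u ^ (-q) := by
    calc v ^ (-q) * z = v ^ (-q) * (z * (u ^ q * u ^ (-q))) := by
          rw [CFC.rpow_mul_rpow_neg q hu0, mul_one]
      _ = (v ^ (-q) * v ^ q) * z * u ^ (-q) := by
          rw [← mul_assoc z, hswap]; simp only [mul_assoc]
      _ = _ := by rw [CFC.rpow_neg_mul_rpow q hv0, one_mul]
  have hsplit : ∀ w : 𝒜, IsStrictlyPositive w → w * w ^ (-q) = w ^ p := by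
    intro w hw
    nth_rw 1 [← CFC.rpow_one w hw.nonneg]
    rw [← CFC.rpow_add hw.isUnit]
    congr 1
    rw [hq]; ring
  have hEpos : ∀ w : 𝒜, 0 ≤ w → 0 ≤ E * w := by
    intro w hw
    rw [hE, ← Algebra.smul_def]
    exact smul_nonneg zero_le hw
  have step1 : star z * c ^ (-q) * z ≤ u ^ p := by
    calc _ ≤ star z * v ^ (-q) * z :=
          star_left_conjugate_le_conjugate (hk_anti hv0 hvc hq0 hq1) z
      _ = star z * z * u ^ (-q) := by rw [mul_assoc (star z), hswapneg, mul_assoc (star z) z]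
      _ ≤ star z * z * u ^ (-q) + E * u ^ (-q) :=
          le_add_of_nonneg_right (hEpos _ CFC.rpow_nonneg)
      _ = u ^ p := by rw [← add_mul, ← hu, hsplit u hu0]
  have hcomm : s * c ^ (-q) = c ^ (-q) * s := by
    have h1 : Commute x c := by
      rw [hc]; exact (Commute.refl x).add_right (hEc x).symm
    have h2 : Commute s c := by
      rw [hs, CFC.sqrt_eq_cfc]; exact h1.cfc_nnreal _
    have h3 : Commute (c ^ (-q)) s := by
      rw [CFC.rpow_def]; exact h2.symm.cfc_nnreal _
    exact h3.symm.eq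
  have step2 : star z * c ^ (-q) * z = star t * (x * c ^ (-q)) * t := by
    rw [hz, star_mul, hsa, ← hss]
    simp only [mul_assoc]
    rw [← mul_assoc (c ^ (-q)) s, ← hcomm]
    simp only [mul_assoc]
  have step3 : E * c ^ (-q) ≤ algebraMap ℝ≥0 𝒜 (e ^ p) := by
    have h1 : c ^ (-q) ≤ E ^ (-q) := hk_anti hE0 (le_add_of_nonneg_left hx) hq0 hq1
    have h2 : E * c ^ (-q) ≤ E * E ^ (-q) := by
      have := hEpos _ (sub_nonneg.mpr h1)
      rwa [mul_sub, sub_nonneg] at this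
    rwa [hsplit E hE0, hE, CFC.rpow_algebraMap] at h2
  rw [← hzz]
  calc star t * x ^ p * t ≤ star t * c ^ p * t :=
        star_left_conjugate_le_conjugate
          (CFC.rpow_le_rpow ⟨hp0.le, hp1.le⟩ (le_add_of_nonneg_right hE0.nonneg)) t
    _ = star z * c ^ (-q) * z + star t * (E * c ^ (-q)) * t := by
        rw [step2, ← hsplit c hc0, ← add_mul, ← mul_add, ← add_mul]
    _ ≤ u ^ p + star t * algebraMap ℝ≥0 𝒜 (e ^ p) * t :=
        add_le_add step1 (star_left_conjugate_le_conjugate step3 t)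
    _ = _ := by rw [← Algebra.commutes (e ^ p) (star t), mul_assoc]

open scoped NNReal in
theorem hk_hansen (x t : 𝒜) (hx : 0 ≤ x) (ht : ‖t‖ ≤ 1) (p : ℝ) (hp : p ∈ Set.Ioo (0 : ℝ) 1) :
    star t * x ^ p * t ≤ (star t * x * t) ^ p := by
  have hy : 0 ≤ star t * x * t := star_left_conjugate_nonneg hx t
  set y := star t * x * t with hyd
  obtain ⟨r, rfl⟩ : ∃ r : ℝ≥0, (r : ℝ) = p := ⟨⟨p, hp.1.le⟩, rfl⟩
  have hr : 0 < r := by exact_mod_cast hp.1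
  have hcE : Continuous (algebraMap ℝ≥0 𝒜) := by
    have : (algebraMap ℝ≥0 𝒜 : ℝ≥0 → 𝒜) = fun e => e • (1 : 𝒜) := by
      ext e; exact Algebra.algebraMap_eq_smul_one e
    rw [this]; fun_prop
  have hEn : ∀ e : ℝ≥0, 0 ≤ algebraMap ℝ≥0 𝒜 e := fun e => by
    rw [Algebra.algebraMap_eq_smul_one]; exact smul_nonneg zero_le zero_le_one
  have hlim : Filter.Tendsto (fun e : ℝ≥0 => (y + algebraMap ℝ≥0 𝒜 e) ^ (r : ℝ)
      + algebraMap ℝ≥0 𝒜 (e ^ (r : ℝ)) * (star t * t)) (nhdsWithin 0 (Set.Ioi 0))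
      (nhds (y ^ (r : ℝ))) := by
    have h1 : Continuous fun e : ℝ≥0 => (y + algebraMap ℝ≥0 𝒜 e) ^ (r : ℝ) := by
      simp_rw [← CFC.nnrpow_eq_rpow hr]
      exact (CFC.continuousOn_nnrpow (A := 𝒜) r).comp_continuous (by fun_prop)
        (fun e => add_nonneg hy (hEn e))
    have h2 : Continuous fun e : ℝ≥0 => algebraMap ℝ≥0 𝒜 (e ^ (r : ℝ)) * (star t * t) :=
      (hcE.comp (NNReal.continuous_rpow_const r.2)).mul continuous_const
    have := (((h1.fun_add h2)).tendsto 0).mono_left (nhdsWithin_le_nhds (s := Set.Ioi 0))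
    simpa [NNReal.zero_rpow hp.1.ne', hr.ne'] using this
  refine ge_of_tendsto hlim ?_
  filter_upwards [self_mem_nhdsWithin] with e he using hk_hansen_eps x t hx ht r hp e he

open scoped NNReal in
theorem hk_smul_rpow (x : 𝒜) (hx : 0 ≤ x) (r : ℝ) (hr : 0 ≤ r) (p : ℝ) (hp : 0 < p) :
    (r • x) ^ p = (r ^ p) • x ^ p := by
  rw [CFC.rpow_eq_cfc_real (smul_nonneg hr hx), CFC.rpow_eq_cfc_real hx]
  have hc := Real.continuous_rpow_const hp.le
  rw [← cfc_comp_smul r (fun y : ℝ => y ^ p) x hc.continuousOn,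
    ← cfc_smul (r ^ p) (fun y : ℝ => y ^ p) x hc.continuousOn]
  refine cfc_congr fun y hy => ?_
  have hy0 : 0 ≤ y := spectrum_nonneg_of_nonneg hx hy
  simp [Real.mul_rpow hr hy0]

end


/-- **Heinz–Kato inequality, C*-algebra quadratic-form version.**
If `a`, `b` are positive elements of a unital C*-algebra `𝒜`, `t ∈ 𝒜` and `M ≥ 0`
satisfy `t* b² t ≤ M² a²`, then for every `α ∈ (0,1)` one has
`t* b^(2α) t ≤ M^(2α) ‖t‖^(2(1-α)) a^(2α)`, where the fractional powers are given
by the continuous functional calculus. -/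
theorem heinz_kato_cstar
    {𝒜 : Type*} [CStarAlgebra 𝒜] [PartialOrder 𝒜] [StarOrderedRing 𝒜]
    (a b t : 𝒜) (ha : 0 ≤ a) (hb : 0 ≤ b)
    (M : ℝ) (hM : 0 ≤ M)
    (h : star t * b ^ 2 * t ≤ (M ^ 2) • a ^ 2)
    (α : ℝ) (hα : α ∈ Set.Ioo (0 : ℝ) 1) :
    star t * b ^ (2 * α) * t ≤ (M ^ (2 * α) * ‖t‖ ^ (2 * (1 - α))) • a ^ (2 * α) := by
  obtain ⟨hα0, hα1⟩ := hα
  have hpow : ∀ w : 𝒜, 0 ≤ w → w ^ (2 * α) = (w ^ 2) ^ α := by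
    intro w hw
    rw [← CFC.rpow_natCast w 2 hw, CFC.rpow_rpow_of_exponent_nonneg w _ _ (by simp) hα0.le hw]
    simp
  rcases eq_or_ne t 0 with rfl | ht
  · have : (0 : ℝ) ^ (2 * (1 - α)) = 0 := Real.zero_rpow (by linarith)
    simp [this]
  have hN : 0 < ‖t‖ := norm_pos_iff.mpr ht
  have hb2 : 0 ≤ b ^ 2 := by
    have := star_mul_self_nonneg b
    rwa [(IsSelfAdjoint.of_nonneg hb).star_eq, ← pow_two] at this
  have ha2 : 0 ≤ a ^ 2 := by
    have := star_mul_self_nonneg a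
    rwa [(IsSelfAdjoint.of_nonneg ha).star_eq, ← pow_two] at this
  have hs : ‖(‖t‖⁻¹ : ℝ) • t‖ ≤ 1 := by
    rw [norm_smul, norm_inv, norm_norm, inv_mul_cancel₀ hN.ne']
  have hconj : ∀ w : 𝒜, star ((‖t‖⁻¹ : ℝ) • t) * w * ((‖t‖⁻¹ : ℝ) • t)
      = (‖t‖⁻¹ ^ 2 : ℝ) • (star t * w * t) := by
    intro w
    rw [star_smul, star_trivial, smul_mul_assoc, smul_mul_assoc, mul_smul_comm, smul_smul, pow_two]
  have h1 := hk_hansen (b ^ 2) ((‖t‖⁻¹ : ℝ) • t) hb2 hs α ⟨hα0, hα1⟩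
  rw [hconj, hconj, hk_smul_rpow _ (star_left_conjugate_nonneg hb2 t) _ (by positivity) _ hα0] at h1
  have h2 : (star t * b ^ 2 * t) ^ α ≤ ((M ^ 2) ^ α) • (a ^ 2) ^ α := by
    rw [← hk_smul_rpow _ ha2 _ (by positivity) _ hα0]
    exact CFC.rpow_le_rpow ⟨hα0.le, hα1.le⟩ h
  have h3 := smul_le_smul_of_nonneg_left
    (h1.trans (smul_le_smul_of_nonneg_left h2 (by positivity : (0 : ℝ) ≤ (‖t‖⁻¹ ^ 2) ^ α)))
    (by positivity : (0 : ℝ) ≤ ‖t‖ ^ 2)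
  rw [hpow a ha, hpow b hb]
  rw [smul_smul, smul_smul, smul_smul] at h3
  have e1 : ‖t‖ ^ 2 * ‖t‖⁻¹ ^ 2 = 1 := by field_simp
  have e2 : ‖t‖ ^ 2 * (‖t‖⁻¹ ^ 2) ^ α * (M ^ 2) ^ α
      = M ^ (2 * α) * ‖t‖ ^ (2 * (1 - α)) := by
    have hx1 : (M ^ 2) ^ α = M ^ (2 * α) := by
      rw [Real.rpow_mul hM]; simp
    have hx2 : (‖t‖⁻¹ ^ 2) ^ α = ‖t‖ ^ (-(2 * α)) := by
      rw [Real.rpow_neg hN.le, Real.rpow_mul hN.le, inv_pow, Real.inv_rpow (by positivity)]; simp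
    have hx3 : ‖t‖ ^ (2 * (1 - α)) = ‖t‖ ^ 2 * ‖t‖ ^ (-(2 * α)) := by
      rw [← Real.rpow_natCast ‖t‖ 2, ← Real.rpow_add hN]
      congr 1; push_cast; ring
    rw [hx1, hx2, hx3]; ring
  rw [e1, e2, one_smul] at h3
  exact h3
end
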